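/- arXiv:1512.08237 — 4 statements merged into one kernel-verified Lean document; each statement's English description precedes it below -/
import Mathlib

section
/- Let N and ξ₁ be real numbers with 0 < ξ₁ < N. Then the principal value integral p.v.∫_{-N}^{N} 1/(ξ₁² - t²) dt exists and equals (1/ξ₁) · ln((N + ξ₁)/(N - ξ₁)), where the principal value is defined as the limit as ε → 0+ of the integral over [-N, N] with the intervals (ξ₁ - ε, ξ₁ + ε) and (-ξ₁ - ε, -ξ₁ + ε) removed. -/
open MeasureTheory Filter Set

lemma pv_aux (x a b : ℝ) (hx : 0 < x) (hab : a ≤ b)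
    (h1 : ∀ t ∈ Icc a b, x + t ≠ 0) (h2 : ∀ t ∈ Icc a b, x - t ≠ 0) :
    IntegrableOn (fun t : ℝ => 1 / (x ^ 2 - t ^ 2)) (Icc a b) ∧
    ∫ t in Ioc a b, 1 / (x ^ 2 - t ^ 2) =
      (1 / (2 * x)) * (Real.log (x + b) - Real.log (x - b))
      - (1 / (2 * x)) * (Real.log (x + a) - Real.log (x - a)) := by
  have hne : ∀ t ∈ Icc a b, x ^ 2 - t ^ 2 ≠ 0 := by
    intro t ht
    have := mul_ne_zero (h1 t ht) (h2 t ht)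
    intro h
    apply this
    linarith [show (x + t) * (x - t) = x ^ 2 - t ^ 2 by ring]
  have hc : ContinuousOn (fun t : ℝ => 1 / (x ^ 2 - t ^ 2)) (Icc a b) :=
    ContinuousOn.div (by fun_prop) (by fun_prop) hne
  refine ⟨hc.integrableOn_Icc, ?_⟩
  rw [← intervalIntegral.integral_of_le hab]
  apply intervalIntegral.integral_eq_sub_of_hasDerivAt
    (f := fun t => (1 / (2 * x)) * (Real.log (x + t) - Real.log (x - t)))
  · intro t ht
    rw [uIcc_of_le hab] at ht
    have e1 := ((hasDerivAt_id t).const_add x).log (h1 t ht)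
    have e2 := ((hasDerivAt_id t).const_sub x).log (h2 t ht)
    have := (e1.sub e2).const_mul (1 / (2 * x))
    refine this.congr_deriv ?_
    have a1 := h1 t ht
    have a2 := h2 t ht
    have a3 := hne t ht
    simp only [id]
    rw [show x ^ 2 - t ^ 2 = (x + t) * (x - t) by ring]
    field_simp
    ring
  · apply ContinuousOn.intervalIntegrable
    rwa [uIcc_of_le hab]

/-- For `0 < ξ₁ < N`, the principal value integral `p.v.∫_{-N}^{N} 1/(ξ₁² - t²) dt`
(the limit as `ε → 0+` of the integral over `[-N, N]` with the symmetric intervals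
`(ξ₁ - ε, ξ₁ + ε)` and `(-ξ₁ - ε, -ξ₁ + ε)` removed) exists and equals
`(1/ξ₁) · ln((N + ξ₁)/(N - ξ₁))`. -/
theorem pv_integral_one_div_sq_sub_sq (N ξ₁ : ℝ) (h0 : 0 < ξ₁) (hN : ξ₁ < N) :
    Tendsto (fun ε : ℝ =>
        ∫ t in Ioo (-N) N \ (Ioo (ξ₁ - ε) (ξ₁ + ε) ∪ Ioo (-ξ₁ - ε) (-ξ₁ + ε)),
          1 / (ξ₁ ^ 2 - t ^ 2))
      (nhdsWithin 0 (Ioi 0)) (nhds ((1 / ξ₁) * Real.log ((N + ξ₁) / (N - ξ₁)))) := by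
  have key : ∀ ε : ℝ, 0 < ε → ε < ξ₁ → ε < N - ξ₁ →
      (1 / ξ₁) * (Real.log (2 * ξ₁ - ε) - Real.log (2 * ξ₁ + ε)
        + Real.log ((N + ξ₁) / (N - ξ₁))) =
      ∫ t in Ioo (-N) N \ (Ioo (ξ₁ - ε) (ξ₁ + ε) ∪ Ioo (-ξ₁ - ε) (-ξ₁ + ε)),
          1 / (ξ₁ ^ 2 - t ^ 2) := by
    intro ε he h1 h2
    have hs : Ioo (-N) N \ (Ioo (ξ₁ - ε) (ξ₁ + ε) ∪ Ioo (-ξ₁ - ε) (-ξ₁ + ε)) =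
        Ioc (-N) (-ξ₁ - ε) ∪ (Icc (-ξ₁ + ε) (ξ₁ - ε) ∪ Ico (ξ₁ + ε) N) := by
      ext t
      simp only [mem_diff, mem_union, mem_Ioo, mem_Ioc, mem_Icc, mem_Ico]
      grind
    obtain ⟨i1, v1⟩ := pv_aux ξ₁ (-N) (-ξ₁ - ε) h0 (by linarith)
      (by rintro t ⟨_, _⟩; apply ne_of_lt; linarith)
      (by rintro t ⟨_, _⟩; apply ne_of_gt; linarith)
    obtain ⟨i2, v2⟩ := pv_aux ξ₁ (-ξ₁ + ε) (ξ₁ - ε) h0 (by linarith)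
      (by rintro t ⟨_, _⟩; apply ne_of_gt; linarith)
      (by rintro t ⟨_, _⟩; apply ne_of_gt; linarith)
    obtain ⟨i3, v3⟩ := pv_aux ξ₁ (ξ₁ + ε) N h0 (by linarith)
      (by rintro t ⟨_, _⟩; apply ne_of_gt; linarith)
      (by rintro t ⟨_, _⟩; apply ne_of_lt; linarith)
    have j1 := i1.mono_set Ioc_subset_Icc_self
    have j3 := i3.mono_set Ico_subset_Icc_self
    rw [hs, setIntegral_union _ (measurableSet_Icc.union measurableSet_Ico) j1 (i2.union j3),
      setIntegral_union _ measurableSet_Ico i2 j3, integral_Icc_eq_integral_Ioc,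
      integral_Ico_eq_integral_Ioo, ← integral_Ioc_eq_integral_Ioo, v1, v2, v3,
      Real.log_div (by linarith) (by linarith)]
    · rw [show ξ₁ + (-ξ₁ - ε) = -ε by ring, show ξ₁ - (-ξ₁ - ε) = 2 * ξ₁ + ε by ring,
        show ξ₁ + -N = -(N - ξ₁) by ring, show ξ₁ - -N = N + ξ₁ by ring,
        show ξ₁ + (ξ₁ - ε) = 2 * ξ₁ - ε by ring, show ξ₁ - (ξ₁ - ε) = ε by ring,
        show ξ₁ + (-ξ₁ + ε) = ε by ring, show ξ₁ - (-ξ₁ + ε) = 2 * ξ₁ - ε by ring,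
        show ξ₁ + (ξ₁ + ε) = 2 * ξ₁ + ε by ring, show ξ₁ - (ξ₁ + ε) = -ε by ring,
        show ξ₁ - N = -(N - ξ₁) by ring, show ξ₁ + N = N + ξ₁ by ring]
      simp only [Real.log_neg_eq_log]
      field_simp
      ring
    · rw [Set.disjoint_left]
      rintro t ⟨_, _⟩ ⟨_, _⟩
      linarith
    · rw [Set.disjoint_left]
      rintro t ⟨_, _⟩ (⟨_, _⟩ | ⟨_, _⟩) <;> linarith
  have hc : ContinuousAt (fun ε : ℝ => (1 / ξ₁) * (Real.log (2 * ξ₁ - ε) - Real.log (2 * ξ₁ + ε)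
        + Real.log ((N + ξ₁) / (N - ξ₁)))) 0 := by
    have a1 : ContinuousAt (fun ε : ℝ => Real.log (2 * ξ₁ - ε)) 0 :=
      ContinuousAt.log (by fun_prop) (by simp; linarith)
    have a2 : ContinuousAt (fun ε : ℝ => Real.log (2 * ξ₁ + ε)) 0 :=
      ContinuousAt.log (by fun_prop) (by simp; linarith)
    exact ((a1.sub a2).add continuousAt_const).const_mul _
  have hl := hc.tendsto.mono_left (nhdsWithin_le_nhds (s := Ioi 0))
  simp only [sub_zero, add_zero, sub_self, zero_add] at hl
  refine hl.congr' ?_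
  have m1 : ∀ᶠ ε : ℝ in nhdsWithin 0 (Ioi 0), ε < ξ₁ :=
    nhdsWithin_le_nhds (eventually_lt_nhds h0)
  have m2 : ∀ᶠ ε : ℝ in nhdsWithin 0 (Ioi 0), ε < N - ξ₁ :=
    nhdsWithin_le_nhds (eventually_lt_nhds (sub_pos.2 hN))
  filter_upwards [m1, m2, self_mem_nhdsWithin] with ε e1 e2 e3
  exact key ε e3 e1 e2
end

section
/- Let N and ξ₁ be real numbers with 0 < ξ₁ < N. Then the principal value integral T_{6,N}(ξ₁) = p.v.∫_{-N}^{N} t⁶/(ξ₁² - t²) dt exists and equals -(2/5)N⁵ - (2/3)ξ₁²N³ - 2ξ₁⁴N + ξ₁⁵ · ln((N + ξ₁)/(N - ξ₁)). -/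
open MeasureTheory Filter Set

/-- antiderivative -/
noncomputable def pvF (a t : ℝ) : ℝ :=
  -t ^ 5 / 5 - a ^ 2 * t ^ 3 / 3 - a ^ 4 * t + a ^ 5 / 2 * (Real.log (a + t) - Real.log (a - t))

lemma pv_piece (a u v : ℝ) (huv : u ≤ v) (h : ∀ t ∈ Icc u v, a + t ≠ 0 ∧ a - t ≠ 0) :
    IntegrableOn (fun t : ℝ => t ^ 6 / (a ^ 2 - t ^ 2)) (Icc u v) ∧
    ∫ t in Icc u v, t ^ 6 / (a ^ 2 - t ^ 2) = pvF a v - pvF a u := by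
  have hne : ∀ t ∈ Icc u v, a ^ 2 - t ^ 2 ≠ 0 := by
    intro t ht
    have := mul_ne_zero (h t ht).1 (h t ht).2
    intro h'
    apply this
    linarith [show (a + t) * (a - t) = a ^ 2 - t ^ 2 by ring]
  have hc : ContinuousOn (fun t : ℝ => t ^ 6 / (a ^ 2 - t ^ 2)) (Icc u v) :=
    ContinuousOn.div (by fun_prop) (by fun_prop) hne
  refine ⟨hc.integrableOn_Icc, ?_⟩
  rw [integral_Icc_eq_integral_Ioc, ← intervalIntegral.integral_of_le huv]
  apply intervalIntegral.integral_eq_sub_of_hasDerivAt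
  · intro t ht
    rw [uIcc_of_le huv] at ht
    obtain ⟨h1, h2⟩ := h t ht
    have h3 := hne t ht
    have d1 : HasDerivAt (fun t : ℝ => Real.log (a + t)) (1 / (a + t)) t :=
      ((hasDerivAt_id t).const_add a).log h1
    have d2 : HasDerivAt (fun t : ℝ => Real.log (a - t)) (-1 / (a - t)) t :=
      ((hasDerivAt_id t).const_sub a).log h2
    have d3 : HasDerivAt (fun t : ℝ => -t ^ 5 / 5 - a ^ 2 * t ^ 3 / 3 - a ^ 4 * t)
        (-(5 * t ^ 4) / 5 - a ^ 2 * (3 * t ^ 2) / 3 - a ^ 4 * 1) t := by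
      have e5 := ((hasDerivAt_pow 5 t).neg.div_const 5)
      have e3 := (((hasDerivAt_pow 3 t).const_mul (a ^ 2)).div_const 3)
      have e1 := (hasDerivAt_id t).const_mul (a ^ 4)
      have := (e5.sub e3).sub e1
      norm_num at this ⊢
      exact this
    have d := d3.add ((d1.sub d2).const_mul (a ^ 5 / 2))
    have e : t ^ 6 / (a ^ 2 - t ^ 2) = (-(5 * t ^ 4) / 5 - a ^ 2 * (3 * t ^ 2) / 3 - a ^ 4 * 1)
        + a ^ 5 / 2 * (1 / (a + t) - -1 / (a - t)) := by
      rw [show a ^ 2 - t ^ 2 = (a + t) * (a - t) by ring]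
      field_simp
      ring
    rw [e]
    exact d
  · apply ContinuousOn.intervalIntegrable
    rwa [uIcc_of_le huv]

lemma pv_eq (N a ε : ℝ) (h0 : 0 < a) (he : 0 < ε) (he1 : ε < a) (he2 : ε < N - a) :
    ∫ t in Ioo (-N) N \ (Ioo (a - ε) (a + ε) ∪ Ioo (-a - ε) (-a + ε)),
          t ^ 6 / (a ^ 2 - t ^ 2) =
      (pvF a (-a - ε) - pvF a (-N)) + (pvF a (a - ε) - pvF a (-a + ε))
        + (pvF a N - pvF a (a + ε)) := by
  have hs : Ioo (-N) N \ (Ioo (a - ε) (a + ε) ∪ Ioo (-a - ε) (-a + ε)) =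
      (Ioc (-N) (-a - ε) ∪ Icc (-a + ε) (a - ε)) ∪ Ico (a + ε) N := by
    ext t
    simp only [mem_diff, mem_union, mem_Ioo, mem_Ioc, mem_Icc, mem_Ico]
    grind
  obtain ⟨i1, e1⟩ := pv_piece a (-N) (-a - ε) (by linarith) (by
    rintro t ⟨_, _⟩; constructor <;> intro _ <;> linarith)
  obtain ⟨i2, e2⟩ := pv_piece a (-a + ε) (a - ε) (by linarith) (by
    rintro t ⟨_, _⟩; constructor <;> intro _ <;> linarith)
  obtain ⟨i3, e3⟩ := pv_piece a (a + ε) N (by linarith) (by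
    rintro t ⟨_, _⟩; constructor <;> intro _ <;> linarith)
  have j1 := i1.mono_set Ioc_subset_Icc_self
  have j3 := i3.mono_set Ico_subset_Icc_self
  rw [hs, setIntegral_union _ measurableSet_Ico (j1.union i2) j3,
    setIntegral_union _ measurableSet_Icc j1 i2, ← integral_Icc_eq_integral_Ioc,
    integral_Ico_eq_integral_Ioo, ← integral_Ioc_eq_integral_Ioo,
    ← integral_Icc_eq_integral_Ioc, e1, e2, e3]
  · rw [Set.disjoint_left]
    simp only [mem_Ioc, mem_Icc]
    grind
  · rw [Set.disjoint_left]
    simp only [mem_Ioc, mem_Icc, mem_union, mem_Ico]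
    grind

lemma pvF_neg (a t : ℝ) : pvF a (-t) = - pvF a t := by
  unfold pvF
  rw [sub_neg_eq_add, ← sub_eq_add_neg]
  ring

/-- For `0 < ξ₁ < N`, the principal value integral
`T_{6,N}(ξ₁) = p.v.∫_{-N}^{N} t⁶/(ξ₁² - t²) dt` exists and equals
`-(2/5)N⁵ - (2/3)ξ₁²N³ - 2ξ₁⁴N + ξ₁⁵ · ln((N + ξ₁)/(N - ξ₁))`. -/
theorem pv_integral_pow_six_div_sq_sub_sq (N ξ₁ : ℝ) (h0 : 0 < ξ₁) (hN : ξ₁ < N) :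
    Tendsto (fun ε : ℝ =>
        ∫ t in Ioo (-N) N \ (Ioo (ξ₁ - ε) (ξ₁ + ε) ∪ Ioo (-ξ₁ - ε) (-ξ₁ + ε)),
          t ^ 6 / (ξ₁ ^ 2 - t ^ 2))
      (nhdsWithin 0 (Ioi 0))
      (nhds (-(2 / 5) * N ^ 5 - (2 / 3) * ξ₁ ^ 2 * N ^ 3 - 2 * ξ₁ ^ 4 * N +
        ξ₁ ^ 5 * Real.log ((N + ξ₁) / (N - ξ₁)))) := by
  set G : ℝ → ℝ := fun ε => 2 * pvF ξ₁ N
    + 2 * (((ξ₁ + ε) ^ 5 - (ξ₁ - ε) ^ 5) / 5 + ξ₁ ^ 2 * ((ξ₁ + ε) ^ 3 - (ξ₁ - ε) ^ 3) / 3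
      + ξ₁ ^ 4 * (2 * ε))
    - ξ₁ ^ 5 * (Real.log (2 * ξ₁ + ε) - Real.log (2 * ξ₁ - ε)) with hG
  have hGc : ContinuousAt G 0 := by
    have c1 : ContinuousAt (fun ε : ℝ => Real.log (2 * ξ₁ + ε)) 0 :=
      ContinuousAt.log (by fun_prop) (by simp; linarith)
    have c2 : ContinuousAt (fun ε : ℝ => Real.log (2 * ξ₁ - ε)) 0 :=
      ContinuousAt.log (by fun_prop) (by simp; linarith)
    rw [hG]
    fun_prop
  have hG0 : G 0 = -(2 / 5) * N ^ 5 - (2 / 3) * ξ₁ ^ 2 * N ^ 3 - 2 * ξ₁ ^ 4 * N +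
        ξ₁ ^ 5 * Real.log ((N + ξ₁) / (N - ξ₁)) := by
    simp only [hG, pvF]
    rw [Real.log_div (by linarith) (by linarith), ← Real.log_neg_eq_log (ξ₁ - N), neg_sub,
      add_comm ξ₁ N]
    ring_nf
  rw [← hG0]
  refine (hGc.tendsto.mono_left nhdsWithin_le_nhds).congr' ?_
  have hpos : 0 < min ξ₁ (N - ξ₁) := lt_min h0 (by linarith)
  filter_upwards [Ioo_mem_nhdsGT hpos] with ε hε
  obtain ⟨he, hm⟩ := hε
  rw [pv_eq N ξ₁ ε h0 he (hm.trans_le (min_le_left _ _)) (hm.trans_le (min_le_right _ _)),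
    show -ξ₁ - ε = -(ξ₁ + ε) by ring, show -ξ₁ + ε = -(ξ₁ - ε) by ring, pvF_neg, pvF_neg, pvF_neg]
  have f1 : pvF ξ₁ (ξ₁ + ε) = -(ξ₁ + ε) ^ 5 / 5 - ξ₁ ^ 2 * (ξ₁ + ε) ^ 3 / 3 - ξ₁ ^ 4 * (ξ₁ + ε)
      + ξ₁ ^ 5 / 2 * (Real.log (2 * ξ₁ + ε) - Real.log ε) := by
    unfold pvF
    rw [show ξ₁ - (ξ₁ + ε) = -ε by ring, Real.log_neg_eq_log,
      show ξ₁ + (ξ₁ + ε) = 2 * ξ₁ + ε by ring]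
  have f2 : pvF ξ₁ (ξ₁ - ε) = -(ξ₁ - ε) ^ 5 / 5 - ξ₁ ^ 2 * (ξ₁ - ε) ^ 3 / 3 - ξ₁ ^ 4 * (ξ₁ - ε)
      + ξ₁ ^ 5 / 2 * (Real.log (2 * ξ₁ - ε) - Real.log ε) := by
    unfold pvF
    rw [show ξ₁ - (ξ₁ - ε) = ε by ring,
      show ξ₁ + (ξ₁ - ε) = 2 * ξ₁ - ε by ring]
  rw [f1, f2]
  simp only [hG]
  ring
end

section
/- Let N and ξ₁ be real numbers with 0 < ξ₁ < N. Then lim_{τ → 0+} ∫_{-N}^{N} 1/(ξ₁² - (t + iτ)²) dt = (1/ξ₁) · ln((N + ξ₁)/(N - ξ₁)), where the integrand is the complex-valued function of the real variable t obtained by shifting t into the upper half-plane by iτ, τ > 0. -/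
open MeasureTheory Filter Set

theorem aux_tendsto_log (x : ℝ) (hx : x ≠ 0) :
    Tendsto (fun τ : ℝ => Complex.log ((x : ℂ) + (τ : ℂ) * Complex.I))
      (nhdsWithin 0 (Ioi 0)) (nhds (Complex.log (x : ℂ))) := by
  have hc : Tendsto (fun τ : ℝ => (x : ℂ) + (τ : ℂ) * Complex.I)
      (nhdsWithin 0 (Ioi 0)) (nhds (x : ℂ)) := by
    have : Continuous (fun τ : ℝ => (x : ℂ) + (τ : ℂ) * Complex.I) := by fun_prop
    have h := this.tendsto 0
    simp only [Complex.ofReal_zero, zero_mul, add_zero] at h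
    exact h.mono_left nhdsWithin_le_nhds
  rcases lt_or_gt_of_ne hx with h | h
  · have hw := Complex.continuousWithinAt_log_of_re_neg_of_im_zero (z := (x : ℂ))
      (by simpa using h) (by simp)
    refine hw.tendsto.comp (tendsto_nhdsWithin_iff.2 ⟨hc, ?_⟩)
    filter_upwards [self_mem_nhdsWithin] with τ hτ
    have : (0 : ℝ) < τ := hτ
    simpa using this.le
  · have hw : ContinuousAt Complex.log (x : ℂ) := continuousAt_clog (by simp [h])
    exact hw.tendsto.comp hc

theorem aux_log_neg (x : ℝ) (hx : 0 < x) :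
    Complex.log ((-x : ℝ) : ℂ) = (Real.log x : ℂ) + Real.pi * Complex.I := by
  apply Complex.ext
  · simp [Complex.log_re, abs_of_pos hx]
  · rw [Complex.log_im, Complex.arg_ofReal_of_neg (by linarith)]
    simp

theorem aux_integral (N ξ : ℝ) (h0 : 0 < ξ) (τ : ℝ) (hτ : 0 < τ) :
    ∫ t in (-N)..N, (1 : ℂ) / ((ξ : ℂ) ^ 2 - ((t : ℂ) + (τ : ℂ) * Complex.I) ^ 2)
      = (1 / (2 * ξ) : ℂ) * (
        (Complex.log (((N + ξ : ℝ) : ℂ) + (τ : ℂ) * Complex.I)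
          - Complex.log (((N - ξ : ℝ) : ℂ) + (τ : ℂ) * Complex.I))
        - (Complex.log (((-N + ξ : ℝ) : ℂ) + (τ : ℂ) * Complex.I)
          - Complex.log (((-N - ξ : ℝ) : ℂ) + (τ : ℂ) * Complex.I))) := by
  have hslit : ∀ x : ℝ, (x : ℂ) + (τ : ℂ) * Complex.I ∈ Complex.slitPlane := fun x =>
    Or.inr (by simpa using hτ.ne')
  have hd : ∀ c t : ℝ, HasDerivAt
      (fun t : ℝ => Complex.log (((t + c : ℝ) : ℂ) + (τ : ℂ) * Complex.I))
      (1 / (((t + c : ℝ) : ℂ) + (τ : ℂ) * Complex.I)) t := by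
    intro c t
    refine HasDerivAt.clog_real ?_ (hslit (t + c))
    have h1 : HasDerivAt (fun t : ℝ => t + c) 1 t := (hasDerivAt_id t).add_const c
    simpa using (h1.ofReal_comp).add_const ((τ : ℂ) * Complex.I)
  have hξ : (ξ : ℂ) ≠ 0 := by exact_mod_cast h0.ne'
  have hne : ∀ t : ℝ, (ξ : ℂ) ^ 2 - ((t : ℂ) + (τ : ℂ) * Complex.I) ^ 2 ≠ 0 := by
    intro t h
    have h1 := Complex.slitPlane_ne_zero (hslit (t + ξ))
    have h2 := Complex.slitPlane_ne_zero (hslit (t + -ξ))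
    apply mul_ne_zero h1 h2
    push_cast
    linear_combination -h
  have key := intervalIntegral.integral_eq_sub_of_hasDerivAt (a := -N) (b := N)
    (f := fun t : ℝ => (1 / (2 * ξ) : ℂ) *
      (Complex.log (((t + ξ : ℝ) : ℂ) + (τ : ℂ) * Complex.I)
        - Complex.log (((t + -ξ : ℝ) : ℂ) + (τ : ℂ) * Complex.I)))
    (f' := fun t : ℝ => (1 : ℂ) / ((ξ : ℂ) ^ 2 - ((t : ℂ) + (τ : ℂ) * Complex.I) ^ 2))
    (fun t _ => by
      refine HasDerivAt.congr_deriv (((hd ξ t).sub (hd (-ξ) t)).const_mul (1 / (2 * ξ) : ℂ)) ?_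
      symm
      have h1 := Complex.slitPlane_ne_zero (hslit (t + ξ))
      have h2 := Complex.slitPlane_ne_zero (hslit (t + -ξ))
      have h3 := hne t
      rw [div_sub_div _ _ h1 h2, div_mul_div_comm,
        div_eq_div_iff h3 (mul_ne_zero (mul_ne_zero two_ne_zero hξ) (mul_ne_zero h1 h2))]
      push_cast
      ring)
    (Continuous.intervalIntegrable
      (Continuous.div continuous_const (by fun_prop) hne) _ _)
  rw [key]
  simp only [sub_eq_add_neg]
  ring

/-- For `0 < ξ₁ < N`, the boundary-value limit
`lim_{τ → 0+} ∫_{-N}^{N} 1/(ξ₁² - (t + iτ)²) dt = (1/ξ₁) · ln((N + ξ₁)/(N - ξ₁))`,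
where for `τ > 0` the integrand is the continuous complex-valued function obtained by
shifting `t` into the upper half-plane by `iτ`. -/
theorem tendsto_integral_shifted_kernel_Icc (N ξ₁ : ℝ) (h0 : 0 < ξ₁) (hN : ξ₁ < N) :
    Tendsto (fun τ : ℝ =>
        ∫ t in (-N)..N, (1 : ℂ) / ((ξ₁ : ℂ) ^ 2 - ((t : ℂ) + (τ : ℂ) * Complex.I) ^ 2))
      (nhdsWithin 0 (Ioi 0))
      (nhds (((1 / ξ₁) * Real.log ((N + ξ₁) / (N - ξ₁)) : ℝ) : ℂ)) := by
  have hp : 0 < N + ξ₁ := by linarith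
  have hm : 0 < N - ξ₁ := by linarith
  have hξ : (ξ₁ : ℂ) ≠ 0 := by exact_mod_cast h0.ne'
  have hlim := (((aux_tendsto_log (N + ξ₁) hp.ne').sub (aux_tendsto_log (N - ξ₁) hm.ne')).sub
    ((aux_tendsto_log (-N + ξ₁) (by linarith)).sub
      (aux_tendsto_log (-N - ξ₁) (by linarith)))).const_mul (1 / (2 * ξ₁) : ℂ)
  have e1 : -N + ξ₁ = -(N - ξ₁) := by ring
  have e2 : -N - ξ₁ = -(N + ξ₁) := by ring
  have hval : (((1 / ξ₁) * Real.log ((N + ξ₁) / (N - ξ₁)) : ℝ) : ℂ) =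
      (1 / (2 * ξ₁) : ℂ) * ((Complex.log ((N + ξ₁ : ℝ) : ℂ) - Complex.log ((N - ξ₁ : ℝ) : ℂ))
        - (Complex.log ((-N + ξ₁ : ℝ) : ℂ) - Complex.log ((-N - ξ₁ : ℝ) : ℂ))) := by
    rw [e1, e2, aux_log_neg _ hm, aux_log_neg _ hp, ← Complex.ofReal_log hp.le,
      ← Complex.ofReal_log hm.le, Real.log_div hp.ne' hm.ne', Complex.ofReal_mul,
      Complex.ofReal_sub, Complex.ofReal_div, Complex.ofReal_one]
    field_simp
    ring
  rw [hval]
  refine hlim.congr' ?_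
  filter_upwards [self_mem_nhdsWithin] with τ hτ
  exact (aux_integral N ξ₁ h0 τ hτ).symm
end

section
/- Let φ : ℝ² → ℂ be a Schwartz function and let n ≥ 1 be a natural number. Then lim_{N → ∞} ∫_{-N}^{N} (∂₂^{2n} φ)(ξ₁, 0) · ξ₁^{2n-1} · ln((N - ξ₁)/(N + ξ₁)) dξ₁ = 0. (This is the paper's claim that in the sharp decomposition of (K_a, φ) the summand containing the logarithmic factor does not contribute in the limit N → ∞.) -/
open MeasureTheory Filter Set

lemma aux_decay (φ : SchwartzMap (ℝ × ℝ) ℂ) (n : ℕ) : ∃ C : ℝ, 0 ≤ C ∧ ∀ x : ℝ,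
    ‖iteratedDeriv (2 * n) (fun y : ℝ => φ (x, y)) 0‖ * |x| ^ (2 * n) * (1 + x ^ 2) ≤ C := by
  obtain ⟨C1, h1⟩ := φ.decay' (2 * n) (2 * n)
  obtain ⟨C2, h2⟩ := φ.decay' (2 * n + 2) (2 * n)
  have key : ∀ x : ℝ, ‖iteratedDeriv (2 * n) (fun y : ℝ => φ (x, y)) 0‖ ≤
      ‖iteratedFDeriv ℝ (2 * n) φ (x, 0)‖ := by
    intro x
    rw [← norm_iteratedFDeriv_eq_norm_iteratedDeriv]
    have e : (fun y : ℝ => φ (x, y)) =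
        (fun z : ℝ × ℝ => φ (z + (x, 0))) ∘ (ContinuousLinearMap.inr ℝ ℝ ℝ) := by
      ext y; simp
    have hs : ContDiff ℝ (2 * n : ℕ) (fun z : ℝ × ℝ => φ (z + (x, 0))) :=
      (φ.smooth _).comp (by fun_prop)
    rw [e, ContinuousLinearMap.iteratedFDeriv_comp_right _ hs _ le_rfl,
      iteratedFDeriv_comp_add_right]
    refine (ContinuousMultilinearMap.norm_compContinuousLinearMap_le _ _).trans ?_
    have hz : (ContinuousLinearMap.inr ℝ ℝ ℝ) 0 + ((x, 0) : ℝ × ℝ) = (x, 0) := by simp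
    rw [hz]
    refine mul_le_of_le_one_right (norm_nonneg _) ?_
    refine Finset.prod_le_one (fun _ _ => norm_nonneg _) (fun _ _ => ?_)
    exact ContinuousLinearMap.norm_inr_le_one ℝ ℝ ℝ
  have hb : ∀ x : ℝ,
    ‖iteratedDeriv (2 * n) (fun y : ℝ => φ (x, y)) 0‖ * |x| ^ (2 * n) * (1 + x ^ 2) ≤ C1 + C2 := by
    intro x
    have a1 := h1 (x, 0)
    have a2 := h2 (x, 0)
    have hx : ‖((x, 0) : ℝ × ℝ)‖ = |x| := by simp [Prod.norm_def]
    rw [hx] at a1 a2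
    rw [pow_add, sq_abs] at a2
    have := key x
    calc _ ≤ ‖iteratedFDeriv ℝ (2 * n) φ (x, 0)‖ * |x| ^ (2 * n) * (1 + x ^ 2) := by gcongr
      _ ≤ C1 + C2 := by
        have := add_le_add a1 a2
        refine le_trans (le_of_eq ?_) this
        change _ = |x| ^ (2 * n) * ‖iteratedFDeriv ℝ (2 * n) φ (x, 0)‖ +
          |x| ^ (2 * n) * x ^ 2 * ‖iteratedFDeriv ℝ (2 * n) φ (x, 0)‖
        ring
  exact ⟨C1 + C2, le_trans (by positivity) (hb 0), hb⟩

lemma aux_log0 (N x : ℝ) (h0 : 0 ≤ x) (h : x < N) :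
    |Real.log ((N - x) / (N + x))| ≤ 4 * x / √(N ^ 2 - x ^ 2) := by
  have ha : 0 < N - x := by linarith
  have hb : 0 < N + x := by linarith
  have e : N ^ 2 - x ^ 2 = (N - x) * (N + x) := by ring
  rw [e, Real.sqrt_mul ha.le]
  have hs := Real.sqrt_pos.2 ha
  have ht := Real.sqrt_pos.2 hb
  have hs2 := Real.sq_sqrt ha.le
  have ht2 := Real.sq_sqrt hb.le
  set s := √(N - x)
  set t := √(N + x)
  rw [← hs2, ← ht2, ← div_pow, Real.log_pow, abs_of_nonpos, ← mul_neg, ← Real.log_inv, inv_div]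
  · have hl := Real.log_le_sub_one_of_pos (div_pos ht hs)
    have hst : s ≤ t := Real.sqrt_le_sqrt (by linarith)
    have : t / s - 1 ≤ 2 * x / (s * t) := by
      rw [div_sub_one hs.ne', div_le_div_iff₀ hs (by positivity)]
      have : 2 * x = (t - s) * (t + s) := by nlinarith
      rw [this]
      have : 0 ≤ (t - s) * s * s := mul_nonneg (mul_nonneg (by linarith) hs.le) hs.le
      nlinarith
    push_cast
    calc _ ≤ 2 * (2 * x / (s * t)) := by gcongr; linarith
      _ = _ := by ring
  · have hst : s ≤ t := Real.sqrt_le_sqrt (by linarith)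
    have := Real.log_nonpos (div_pos hs ht).le ((div_le_one ht).2 hst)
    push_cast; linarith

lemma aux_log (N x : ℝ) (h : |x| < N) :
    |Real.log ((N - x) / (N + x))| ≤ 4 * |x| / √(N ^ 2 - x ^ 2) := by
  rcases le_total 0 x with h0 | h0
  · rw [abs_of_nonneg h0] at *
    exact aux_log0 N x h0 h
  · rw [abs_of_nonpos h0] at *
    have := aux_log0 N (-x) (by linarith) h
    rw [← abs_neg, ← Real.log_inv, inv_div]
    simpa [sub_eq_add_neg] using this

lemma aux_int (N : ℝ) (hN : 0 < N) :
    IntervalIntegrable (fun x => 1 / √(N ^ 2 - x ^ 2)) volume (-N) N ∧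
    ∫ x in (-N)..N, 1 / √(N ^ 2 - x ^ 2) = Real.pi := by
  have hc : ContinuousOn (fun x : ℝ => Real.arcsin (x / N)) (Icc (-N) N) :=
    (Real.continuous_arcsin.comp (by fun_prop)).continuousOn
  have hd : ∀ x ∈ Ioo (-N) N, HasDerivAt (fun x : ℝ => Real.arcsin (x / N))
      (1 / √(N ^ 2 - x ^ 2)) x := by
    intro x hx
    have h1 : x / N ≠ -1 := by
      intro h; rw [div_eq_iff hN.ne'] at h; linarith [hx.1]
    have h2 : x / N ≠ 1 := by
      intro h; rw [div_eq_iff hN.ne'] at h; linarith [hx.2]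
    have := (Real.hasDerivAt_arcsin h1 h2).comp x ((hasDerivAt_id x).div_const N)
    refine HasDerivAt.congr_deriv this ?_
    have e : N ^ 2 - x ^ 2 = N ^ 2 * (1 - (x / N) ^ 2) := by field_simp
    rw [e, Real.sqrt_mul (by positivity), Real.sqrt_sq hN.le]
    simp only [one_div, mul_inv]
    ring
  have hi : IntervalIntegrable (fun x => 1 / √(N ^ 2 - x ^ 2)) volume (-N) N := by
    rw [intervalIntegrable_iff_integrableOn_Ioc_of_le (by linarith)]
    exact intervalIntegral.integrableOn_deriv_of_nonneg hc hd (fun x _ => by positivity)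
  refine ⟨hi, ?_⟩
  rw [intervalIntegral.integral_eq_sub_of_hasDerivAt_of_le (by linarith) hc hd hi]
  rw [neg_div, div_self hN.ne', Real.arcsin_neg, Real.arcsin_one]
  ring

lemma aux_split (N x : ℝ) (hN : 0 < N) (h : |x| < N) :
    1 / ((1 + x ^ 2) * √(N ^ 2 - x ^ 2)) ≤
      2 / N * (1 + x ^ 2)⁻¹ + 4 / N ^ 2 * (1 / √(N ^ 2 - x ^ 2)) := by
  have hx2 : x ^ 2 < N ^ 2 := by rw [← sq_abs x]; gcongr
  have hs : 0 < √(N ^ 2 - x ^ 2) := Real.sqrt_pos.2 (by linarith)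
  rcases le_total (x ^ 2) (N ^ 2 / 4) with h1 | h1
  · have : N / 2 ≤ √(N ^ 2 - x ^ 2) := Real.le_sqrt_of_sq_le (by nlinarith)
    have h3 : 1 / ((1 + x ^ 2) * √(N ^ 2 - x ^ 2)) ≤ 1 / ((1 + x ^ 2) * (N / 2)) := by gcongr
    have h4 : 1 / ((1 + x ^ 2) * (N / 2)) = 2 / N * (1 + x ^ 2)⁻¹ := by field_simp
    have : 0 ≤ 4 / N ^ 2 * (1 / √(N ^ 2 - x ^ 2)) := by positivity
    linarith
  · have h3 : 1 / ((1 + x ^ 2) * √(N ^ 2 - x ^ 2)) ≤ 1 / ((N ^ 2 / 4) * √(N ^ 2 - x ^ 2)) := by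
      gcongr; linarith
    have h4 : 1 / ((N ^ 2 / 4) * √(N ^ 2 - x ^ 2)) = 4 / N ^ 2 * (1 / √(N ^ 2 - x ^ 2)) := by
      field_simp
    have : 0 ≤ 2 / N * (1 + x ^ 2)⁻¹ := by positivity
    linarith

/-- For a Schwartz function `φ : ℝ² → ℂ` and `n ≥ 1`,
`lim_{N → ∞} ∫_{-N}^{N} (∂₂^{2n} φ)(ξ₁, 0) · ξ₁^{2n-1} · ln((N - ξ₁)/(N + ξ₁)) dξ₁ = 0`:
the logarithmic summand of the sharp decomposition of `(K_a, φ)` does not contribute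
in the limit `N → ∞`. -/
theorem tendsto_log_summand_zero (φ : SchwartzMap (ℝ × ℝ) ℂ) (n : ℕ) (hn : 1 ≤ n) :
    Tendsto (fun N : ℝ =>
        ∫ ξ₁ in (-N)..N,
          iteratedDeriv (2 * n) (fun y : ℝ => φ (ξ₁, y)) 0 *
            ((ξ₁ ^ (2 * n - 1) * Real.log ((N - ξ₁) / (N + ξ₁)) : ℝ) : ℂ))
      atTop (nhds 0) := by
  obtain ⟨C, hC, hb⟩ := aux_decay φ n
  have hlim : Tendsto (fun N : ℝ => 4 * C * (2 / N * Real.pi + 4 / N ^ 2 * Real.pi))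
      atTop (nhds 0) := by
    have h1 : Tendsto (fun N : ℝ => 2 / N) atTop (nhds 0) := tendsto_const_nhds.div_atTop tendsto_id
    have h2 : Tendsto (fun N : ℝ => 4 / N ^ 2) atTop (nhds 0) :=
      tendsto_const_nhds.div_atTop (tendsto_pow_atTop two_ne_zero)
    simpa using ((h1.mul_const Real.pi).add (h2.mul_const Real.pi)).const_mul (4 * C)
  refine squeeze_zero_norm' ?_ hlim
  filter_upwards [eventually_gt_atTop 0] with N hN
  obtain ⟨hi, hI⟩ := aux_int N hN
  have hi2 : IntervalIntegrable (fun x : ℝ => (1 + x ^ 2)⁻¹) volume (-N) N :=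
    integrable_inv_one_add_sq.intervalIntegrable
  refine (intervalIntegral.norm_integral_le_of_norm_le (by linarith)
    (g := fun x => 4 * C * (2 / N * (1 + x ^ 2)⁻¹ + 4 / N ^ 2 * (1 / √(N ^ 2 - x ^ 2))))
    ?_ (((hi2.const_mul _).add (hi.const_mul _)).const_mul _)).trans ?_
  · refine Eventually.of_forall fun x hx => ?_
    rcases eq_or_lt_of_le hx.2 with rfl | hlt
    · simp only [sub_self, zero_div, Real.log_zero, mul_zero, Complex.ofReal_zero, norm_zero]
      positivity
    have hxN : |x| < N := abs_lt.2 ⟨hx.1, hlt⟩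
    have hl := aux_log N x hxN
    have hsp := aux_split N x hN hxN
    have hbx := hb x
    rw [norm_mul, Complex.norm_real, Real.norm_eq_abs, abs_mul, abs_pow]
    have hg : ‖iteratedDeriv (2 * n) (fun y : ℝ => φ (x, y)) 0‖ * |x| ^ (2 * n) ≤
        C / (1 + x ^ 2) := by
      rwa [le_div_iff₀ (by positivity)]
    have hp : |x| ^ (2 * n) = |x| ^ (2 * n - 1) * |x| := by
      rw [← pow_succ]; congr 1; omega
    calc _ ≤ ‖iteratedDeriv (2 * n) (fun y : ℝ => φ (x, y)) 0‖ *
          (|x| ^ (2 * n - 1) * (4 * |x| / √(N ^ 2 - x ^ 2))) := by gcongr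
      _ = (‖iteratedDeriv (2 * n) (fun y : ℝ => φ (x, y)) 0‖ * |x| ^ (2 * n)) *
          (4 / √(N ^ 2 - x ^ 2)) := by rw [hp]; ring
      _ ≤ C / (1 + x ^ 2) * (4 / √(N ^ 2 - x ^ 2)) := by gcongr
      _ = 4 * C * (1 / ((1 + x ^ 2) * √(N ^ 2 - x ^ 2))) := by
        rw [div_mul_div_comm]; ring
      _ ≤ _ := by gcongr
  · rw [intervalIntegral.integral_const_mul, intervalIntegral.integral_add (hi2.const_mul _)
      (hi.const_mul _), intervalIntegral.integral_const_mul, intervalIntegral.integral_const_mul,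
      hI, integral_inv_one_add_sq]
    have := Real.arctan_lt_pi_div_two N
    have := Real.neg_pi_div_two_lt_arctan (-N)
    gcongr
    linarith
end
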